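/- Distinct output points force positive scales: fix a tree shape T all of whose internal vertices have at least two children, and a decoration of T by normalized injective configurations and nonnegative scales. If the output tuple ω(T) is injective (all its points are pairwise distinct), then the scale at every non-root internal vertex is strictly positive. -/

import Mathlib

/-- Decorated planar rooted trees: a tree is either a leaf, or an internal
vertex decorated by a scale `t` and a configuration `z : Fin k → ℝ^m`, with a
family of `k` children. The scale at the root is never used. -/
inductive DTree (m : ℕ) : Type
  | leaf : DTree m
  | node (k : ℕ) (t : ℝ) (z : Fin k → EuclideanSpace ℝ (Fin m))
      (children : Fin k → DTree m) : DTree m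

namespace DTree

/-- The effective scale of a subtree: the scale at its root vertex, with the
convention that the scale of a leaf is `1`. -/
def scaleOf {m : ℕ} : DTree m → ℝ
  | leaf => 1
  | node _ t _ _ => t

/-- The output tuple `ω(T)` (as a list indexed by the leaves of `T`):
`ω(leaf)` is the single point `0`, and at an internal vertex with
configuration `z` and children `T₁, …, T_k`, `ω` is the concatenation over
`i` of the tuples with entries `z i + t_i • (entry of ω(T_i))`, where `t_i`
is the effective scale of `T_i`. -/
noncomputable def omega {m : ℕ} : DTree m → List (EuclideanSpace ℝ (Fin m))
  | leaf => [0]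
  | node k _ z c =>
      (List.ofFn fun i : Fin k =>
        (omega (c i)).map fun x => z i + scaleOf (c i) • x).flatten

/-- A tree is reduced if every internal vertex has at least two children. -/
def Reduced {m : ℕ} : DTree m → Prop
  | leaf => True
  | node k _ _ c => 2 ≤ k ∧ ∀ i, Reduced (c i)

/-- Every internal vertex carries an injective normalized configuration and a
nonnegative scale. -/
def ValidNonneg {m : ℕ} : DTree m → Prop
  | leaf => True
  | node _ t z c => Function.Injective z ∧ (∑ i, z i) = 0 ∧
      (∑ i, ‖z i‖ ^ 2) = 1 ∧ 0 ≤ t ∧ ∀ i, ValidNonneg (c i)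

/-- The scales at all internal vertices (including the root) are positive. -/
def PosScales {m : ℕ} : DTree m → Prop
  | leaf => True
  | node _ t _ c => 0 < t ∧ ∀ i, PosScales (c i)

/-- The scales at all non-root internal vertices are positive. -/
def NonRootPosScales {m : ℕ} : DTree m → Prop
  | leaf => True
  | node _ _ _ c => ∀ i, PosScales (c i)

/-! An internal vertex with scale `0` collapses all its leaves onto a single point, and in a reduced
tree it has at least two of them. Hence distinctness of the output points already rules out
vanishing non-root scales, for arbitrary configurations and scales of either sign. -/

/-- The scales at all internal vertices of a tree, including the root. A leaf carries no scale, so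
its effective scale `1` is not recorded. -/
def scales {m : ℕ} : DTree m → Set ℝ
  | leaf => ∅
  | node _ t _ c => insert t (⋃ i, scales (c i))

/-- The scales at the non-root internal vertices of a tree: the ones on which `ω(T)` depends. -/
def nonRootScales {m : ℕ} : DTree m → Set ℝ
  | leaf => ∅
  | node _ _ _ c => ⋃ i, scales (c i)

section Scales

variable {m : ℕ} {T : DTree m}

theorem nonRootScales_subset_scales : nonRootScales T ⊆ scales T := by
  cases T with
  | leaf => exact subset_rfl
  | node k t z c => exact Set.subset_insert _ _

theorem scales_subset_insert_scaleOf : scales T ⊆ insert (scaleOf T) (nonRootScales T) := by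
  cases T with
  | leaf => exact Set.empty_subset _
  | node k t z c => exact subset_rfl

theorem posScales_iff_forall_mem_scales : PosScales T ↔ ∀ s ∈ scales T, 0 < s := by
  induction T with
  | leaf => simp [PosScales, scales]
  | node k t z c ih =>
    simp only [PosScales, scales, Set.forall_mem_insert, Set.mem_iUnion, forall_exists_index, ih]
    exact and_congr_right fun _ => forall_comm

theorem nonRootPosScales_iff_forall_mem_nonRootScales :
    NonRootPosScales T ↔ ∀ s ∈ nonRootScales T, 0 < s := by
  cases T with
  | leaf => simp [NonRootPosScales, nonRootScales]
  | node k t z c =>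
    simp only [NonRootPosScales, nonRootScales, posScales_iff_forall_mem_scales, Set.mem_iUnion,
      forall_exists_index]
    exact forall_comm

theorem ValidNonneg.nonneg_of_mem_scales (hT : ValidNonneg T) {s : ℝ} (hs : s ∈ scales T) :
    0 ≤ s := by
  induction T with
  | leaf => exact hs.elim
  | node k t z c ih =>
    obtain ⟨-, -, -, ht, hc⟩ := hT
    rcases hs with rfl | hs
    · exact ht
    · obtain ⟨i, hi⟩ := Set.mem_iUnion.1 hs
      exact ih i (hc i) hi

end Scales

section Omega

variable {m k : ℕ} {t : ℝ} {z : Fin k → EuclideanSpace ℝ (Fin m)} {c : Fin k → DTree m}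

theorem length_omega_node :
    (omega (node k t z c)).length = ∑ i, (omega (c i)).length := by
  simp [omega, List.sum_ofFn, Function.comp_def]

theorem le_length_omega_node (hc : ∀ i, omega (c i) ≠ []) :
    k ≤ (omega (node k t z c)).length :=
  calc
    k = ∑ _i : Fin k, 1 := by simp
    _ ≤ ∑ i, (omega (c i)).length :=
      Finset.sum_le_sum fun i _ => List.length_pos_of_ne_nil (hc i)
    _ = (omega (node k t z c)).length := length_omega_node.symm

theorem Reduced.omega_ne_nil {T : DTree m} (hT : Reduced T) : omega T ≠ [] := by
  induction T with
  | leaf => simp [omega]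
  | node k t z c ih =>
    obtain ⟨hk, hc⟩ := hT
    have hlen := le_length_omega_node (t := t) (z := z) fun i => ih i (hc i)
    exact List.ne_nil_of_length_pos (by lia)

theorem Reduced.one_lt_length_omega_node (hT : Reduced (node k t z c)) :
    1 < (omega (node k t z c)).length :=
  hT.1.trans (le_length_omega_node fun i => (hT.2 i).omega_ne_nil)

theorem nodup_map_omega_child (hω : (omega (node k t z c)).Nodup) (i : Fin k) :
    ((omega (c i)).map fun x => z i + scaleOf (c i) • x).Nodup := by
  rw [omega, List.nodup_flatten] at hω
  exact hω.1 _ (List.mem_ofFn.2 ⟨i, rfl⟩)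

end Omega

theorem ne_zero_of_nodup_map_add_smul {R M : Type*} [Zero R] [AddZeroClass M] [SMulWithZero R M]
    {l : List M} (hl : 1 < l.length) {v : M} {a : R} (h : (l.map fun x => v + a • x).Nodup) :
    a ≠ 0 := by
  rintro rfl
  simp only [zero_smul, add_zero, List.map_const', List.nodup_replicate] at h
  exact hl.not_ge h

theorem Reduced.scaleOf_ne_zero {m : ℕ} {T : DTree m} (hT : Reduced T)
    {v : EuclideanSpace ℝ (Fin m)} (h : ((omega T).map fun x => v + scaleOf T • x).Nodup) :
    scaleOf T ≠ 0 := by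
  cases T with
  | leaf => exact one_ne_zero
  | node k t z c => exact ne_zero_of_nodup_map_add_smul hT.one_lt_length_omega_node h

theorem posScales_of_omega_nodup_general {m : ℕ} (T : DTree m) (hred : Reduced T)
    (hω : (omega T).Nodup) : 0 ∉ nonRootScales T := by
  induction T with
  | leaf => exact Set.notMem_empty 0
  | node k t z c ih =>
    intro h0
    obtain ⟨i, hi⟩ := Set.mem_iUnion.1 h0
    have hmap := nodup_map_omega_child hω i
    rcases scales_subset_insert_scaleOf hi with hroot | hbelow
    · exact (hred.2 i).scaleOf_ne_zero hmap hroot.symm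
    · exact ih i (hred.2 i) hmap.of_map hbelow

/-- Distinct output points force positive scales: if a reduced tree is
decorated by normalized injective configurations and nonnegative scales and
its output tuple `ω(T)` has pairwise distinct entries, then the scale at
every non-root internal vertex is strictly positive. -/
theorem posScales_of_omega_nodup {m : ℕ} (T : DTree m)
    (hred : Reduced T) (hval : ValidNonneg T)
    (hω : (omega T).Nodup) :
    NonRootPosScales T :=
  nonRootPosScales_iff_forall_mem_nonRootScales.2 fun _ hs =>
    (hval.nonneg_of_mem_scales (nonRootScales_subset_scales hs)).lt_of_ne'
      (ne_of_mem_of_not_mem hs (posScales_of_omega_nodup_general T hred hω))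

end DTree
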